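/- Let G be a connected bridgeless cubic graph in which every 2-factor consists only of 5-cycles. Then every path of length two in G is contained in at least two distinct cycles of length five. -/

import Mathlib

/-! Multigraphs: vertex type `V`, edge type `E`, incidence map `ends : E → Sym2 V`. -/

namespace Mg

variable {V E : Type}

/-- No loops: no edge has equal endpoints. -/
def NoLoops (ends : E → Sym2 V) : Prop := ∀ e, ¬ (ends e).IsDiag

/-- Cubic: every vertex is incident with exactly three edges. -/
def IsCubic (ends : E → Sym2 V) : Prop := ∀ v, {e | v ∈ ends e}.ncard = 3

/-- Reachability using only edges in `F`. -/
def Reach (ends : E → Sym2 V) (F : Set E) : V → V → Prop :=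
  Relation.ReflTransGen (fun a b => ∃ e ∈ F, ends e = s(a, b))

/-- Connected. -/
def Connected (ends : E → Sym2 V) : Prop := ∀ v w, Reach ends Set.univ v w

/-- Bridgeless: the endpoints of each edge remain joined after its removal. -/
def Bridgeless (ends : E → Sym2 V) : Prop :=
  ∀ e v w, ends e = s(v, w) → Reach ends {f | f ≠ e} v w

/-- A 2-factor: every vertex is incident with exactly two edges of `F`. -/
def IsTwoFactor (ends : E → Sym2 V) (F : Set E) : Prop :=
  ∀ v, {e | e ∈ F ∧ v ∈ ends e}.ncard = 2

/-- The component of `v` in the spanning subgraph with edge set `F`. -/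
def component (ends : E → Sym2 V) (F : Set E) (v : V) : Set V := {w | Reach ends F v w}

/-- Every 2-factor consists only of 5-cycles: each component of any 2-factor
has exactly five vertices. -/
def TwoFactorsAllC5 (ends : E → Sym2 V) : Prop :=
  ∀ F : Set E, IsTwoFactor ends F → ∀ v, (component ends F v).ncard = 5

/-- A perfect matching: every vertex is incident with exactly one edge of `M`. -/
def IsPerfectMatching (ends : E → Sym2 V) (M : Set E) : Prop :=
  ∀ v, ∃! e, e ∈ M ∧ v ∈ ends e

/-- A cycle of length `n`: `n` distinct vertices and `n` distinct edges, cyclically. -/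
def HasCycle (ends : E → Sym2 V) (n : ℕ) : Prop :=
  ∃ (c : ZMod n → V) (f : ZMod n → E), Function.Injective c ∧ Function.Injective f ∧
    ∀ i, ends (f i) = s(c i, c (i + 1))

end Mg

/-!
By Tutte's theorem, a set `D` of edges that lies in no 2-factor gives a set `S` of vertices and at
least `#S + 2` odd unions of components of `G - D - S`. Each of these has an edge cut of size at
least three, while `S` and `D` supply at most `3 * #S + 2 * #D` ends of cut edges. Hence any two
edges lie in a 2-factor, and if `#D = 3` then the count is tight and all the cuts have size three.

A 2-factor through two edges of a 3-edge cut around `X` crosses the cut in a single 5-cycle, so the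
part of this 5-cycle inside `X` determines `#X` modulo 5. Comparing the pairs of cut edges excludes
the residues 0 and 2, and 3 by complementation, while residue 1 forces `X` to be a single vertex.
So every 3-edge cut isolates a vertex.

Consequently, if three edges `D` without a common vertex lie in no 2-factor, then `G - D` is
bipartite and `D` lies inside one part `I`. A 2-factor containing two adjacent edges of `D` but not
the third then has a 5-cycle `C` with `#(C ∩ I) = #(C \ I) + 2`, which is impossible as 5 is odd.
So every path of length three lies in a 2-factor, hence on a 5-cycle of it; the two ways of
prolonging a path of length two at one of its ends give two different 5-cycles.
-/

namespace Mg

open Finset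

variable {V E : Type} {ends : E → Sym2 V}

section Endpoints

lemma NoLoops.ne (hl : NoLoops ends) {e : E} {a b : V} (h : ends e = s(a, b)) : a ≠ b := by
  rintro rfl
  exact hl e (by simp [h])

lemma exists_ends_eq (ends : E → Sym2 V) (e : E) : ∃ a b, ends e = s(a, b) := by
  induction h : ends e with
  | _ a b => exact ⟨a, b, rfl⟩

lemma Reach.mem_of_closed {F : Set E} {Z : Set V}
    (hZ : ∀ e ∈ F, ∀ a b, ends e = s(a, b) → a ∈ Z → b ∈ Z) {x y : V}
    (hr : Reach ends F x y) (hx : x ∈ Z) : y ∈ Z := by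
  induction hr with
  | refl => exact hx
  | tail _ hstep ih =>
    obtain ⟨e, he, hab⟩ := hstep
    exact hZ e he _ _ hab ih

open Classical in
/-- The number of endpoints of `e` in `Z`. -/
noncomputable def endCount (ends : E → Sym2 V) (Z : Finset V) (e : E) : ℕ :=
  #{v ∈ Z | v ∈ ends e}

lemma endCount_eq_ite [DecidableEq V] {Z : Finset V} {e : E} {a b : V} (h : ends e = s(a, b))
    (hab : a ≠ b) :
    endCount ends Z e = (if a ∈ Z then 1 else 0) + (if b ∈ Z then 1 else 0) := by
  have hsplit : endCount ends Z e = #(({v ∈ Z | v = a} : Finset V) ∪ {v ∈ Z | v = b}) := by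
    rw [endCount]
    congr 1
    ext v
    simp only [h, Sym2.mem_iff, mem_filter, mem_union, and_or_left]
  have hdisj : Disjoint ({v ∈ Z | v = a} : Finset V) {v ∈ Z | v = b} :=
    disjoint_filter.2 fun v _ hva hvb => hab (hva.symm.trans hvb)
  rw [hsplit, card_union_of_disjoint hdisj, filter_eq', filter_eq', apply_ite card,
    apply_ite card, card_singleton, card_singleton, card_empty]

open Classical in
/-- The edges of `F` incident with `v`. -/
noncomputable def edgesAt (ends : E → Sym2 V) (F : Finset E) (v : V) : Finset E :=
  {e ∈ F | v ∈ ends e}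

lemma mem_edgesAt {F : Finset E} {v : V} {e : E} : e ∈ edgesAt ends F v ↔ e ∈ F ∧ v ∈ ends e := by
  simp [edgesAt]

lemma sum_card_edgesAt (Z : Finset V) (F : Finset E) :
    ∑ v ∈ Z, #(edgesAt ends F v) = ∑ e ∈ F, endCount ends Z e := by
  classical
  exact sum_card_bipartiteAbove_eq_sum_card_bipartiteBelow fun v e => v ∈ ends e

lemma IsTwoFactor.card_edgesAt {F : Finset E} (hF : IsTwoFactor ends F) (v : V) :
    #(edgesAt ends F v) = 2 := by
  rw [← hF v, ← Set.ncard_coe_finset]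
  simp [edgesAt]

lemma IsTwoFactor.edgesAt_eq_pair [DecidableEq E] {F : Finset E} (hF : IsTwoFactor ends F)
    {v : V} {e f : E} (he : e ∈ F) (hf : f ∈ F) (hne : e ≠ f) (hve : v ∈ ends e)
    (hvf : v ∈ ends f) : edgesAt ends F v = {e, f} := by
  refine (eq_of_subset_of_card_le ?_ ?_).symm
  · simp only [insert_subset_iff, singleton_subset_iff, mem_edgesAt]
    exact ⟨⟨he, hve⟩, hf, hvf⟩
  · rw [hF.card_edgesAt, card_pair hne]

lemma IsTwoFactor.exists_mem_ne {F : Finset E} (hF : IsTwoFactor ends F) (v : V) (e : E) :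
    ∃ g ∈ F, g ≠ e ∧ v ∈ ends g := by
  obtain ⟨g, hg, hne⟩ := Finset.exists_mem_ne (by rw [hF.card_edgesAt v]; omega) e
  exact ⟨g, (mem_edgesAt.1 hg).1, hne, (mem_edgesAt.1 hg).2⟩

end Endpoints

section Cuts

variable [Fintype E]

open Classical in
/-- The edge cut of `Z`: the edges with one endpoint in `Z` and the other outside. A set `Z` is a
union of components of the spanning subgraph `F` exactly when `F` is disjoint from its cut. -/
noncomputable def cut (ends : E → Sym2 V) (Z : Finset V) : Finset E :=
  {e | ∃ a ∈ Z, ∃ b ∉ Z, ends e = s(a, b)}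

lemma mem_cut {Z : Finset V} {e : E} :
    e ∈ cut ends Z ↔ ∃ a ∈ Z, ∃ b ∉ Z, ends e = s(a, b) := by
  simp [cut]

lemma mem_cut_iff_of_ends_eq {Z : Finset V} {e : E} {a b : V} (h : ends e = s(a, b)) :
    e ∈ cut ends Z ↔ ¬(a ∈ Z ↔ b ∈ Z) := by
  rw [mem_cut]
  constructor
  · rintro ⟨x, hx, y, hy, hxy⟩
    rcases Sym2.eq_iff.1 (h.symm.trans hxy) with ⟨rfl, rfl⟩ | ⟨rfl, rfl⟩ <;> tauto
  · intro hiff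
    by_cases ha : a ∈ Z
    · exact ⟨a, ha, b, by tauto, h⟩
    · exact ⟨b, by tauto, a, ha, h.trans Sym2.eq_swap⟩

lemma mem_iff_mem_of_disjoint_cut {F : Finset E} {Z : Finset V} (hZ : Disjoint F (cut ends Z))
    {e : E} (he : e ∈ F) {a b : V} (h : ends e = s(a, b)) : a ∈ Z ↔ b ∈ Z := by
  by_contra hiff
  exact disjoint_left.1 hZ he ((mem_cut_iff_of_ends_eq h).2 hiff)

lemma exists_mem_ends_of_mem_cut {Z : Finset V} {e : E} (he : e ∈ cut ends Z) :
    ∃ a ∈ Z, a ∈ ends e := by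
  obtain ⟨a, ha, b, -, hab⟩ := mem_cut.1 he
  exact ⟨a, ha, by simp [hab]⟩

lemma eq_of_mem_ends_of_mem_cut {Z : Finset V} {e : E} (he : e ∈ cut ends Z) {x y : V}
    (hx : x ∈ Z) (hy : y ∈ Z) (hxe : x ∈ ends e) (hye : y ∈ ends e) : x = y := by
  by_contra hne
  exact (mem_cut_iff_of_ends_eq ((Sym2.mem_and_mem_iff hne).1 ⟨hxe, hye⟩)).1 he (by tauto)

lemma cut_compl [Fintype V] [DecidableEq V] (ends : E → Sym2 V) (Z : Finset V) :
    cut ends Zᶜ = cut ends Z := by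
  ext e
  obtain ⟨a, b, hab⟩ := exists_ends_eq ends e
  simp only [mem_cut_iff_of_ends_eq hab, mem_compl, not_iff_not]

lemma mem_cut_of_mem_cut_inter [DecidableEq V] {X C : Finset V} {e : E}
    (he : e ∈ cut ends (X ∩ C)) (hC : e ∉ cut ends C) : e ∈ cut ends X := by
  obtain ⟨a, b, hab⟩ := exists_ends_eq ends e
  simp only [mem_cut_iff_of_ends_eq hab, mem_inter] at *
  tauto

lemma mem_cut_of_mem_cut_sdiff [DecidableEq V] {X C : Finset V} {e : E}
    (he : e ∈ cut ends (X \ C)) (hC : e ∉ cut ends C) : e ∈ cut ends X := by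
  obtain ⟨a, b, hab⟩ := exists_ends_eq ends e
  simp only [mem_cut_iff_of_ends_eq hab, mem_sdiff] at *
  tauto

lemma mem_cut_singleton (hl : NoLoops ends) {v : V} {e : E} :
    e ∈ cut ends {v} ↔ v ∈ ends e := by
  obtain ⟨a, b, hab⟩ := exists_ends_eq ends e
  have hne := hl.ne hab
  simp only [mem_cut_iff_of_ends_eq hab, hab, mem_singleton, Sym2.mem_iff]
  grind

lemma disjoint_cut_erase [DecidableEq V] [DecidableEq E] {F : Finset E} {X : Finset V} {x : V}
    (hx : x ∈ X) (hcut : F ∩ cut ends X = edgesAt ends F x) :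
    Disjoint F (cut ends (X.erase x)) := by
  rw [disjoint_left]
  intro e heF he
  obtain ⟨a, ha, b, hb, hab⟩ := mem_cut.1 he
  have hmem : e ∈ cut ends X ∧ x ∈ ends e := by
    have hiff : e ∈ cut ends X ↔ x ∈ ends e := by
      simpa [mem_edgesAt, heF] using congrArg (e ∈ ·) hcut
    have hor : e ∈ cut ends X ∨ x ∈ ends e := by
      simp only [mem_cut_iff_of_ends_eq hab, hab, Sym2.mem_iff]
      grind
    tauto
  exact (mem_erase.1 ha).1
    (eq_of_mem_ends_of_mem_cut hmem.1 (mem_of_mem_erase ha) hx (by simp [hab]) hmem.2)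

lemma Connected.eq_univ_of_cut_eq_empty [Fintype V] (hconn : Connected ends) {Z : Finset V}
    (hcut : cut ends Z = ∅) (hZ : Z.Nonempty) : Z = univ := by
  obtain ⟨z, hz⟩ := hZ
  have hclosed : Disjoint univ (cut ends Z) := by simp [hcut]
  refine eq_univ_of_forall fun v => (hconn z v).mem_of_closed (Z := Z) ?_ hz
  intro e _ a b hab
  exact (mem_iff_mem_of_disjoint_cut hclosed (mem_univ e) hab).1

lemma endCount_mod_two [DecidableEq E] (hl : NoLoops ends) (Z : Finset V) (e : E) :
    endCount ends Z e % 2 = if e ∈ cut ends Z then 1 else 0 := by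
  obtain ⟨a, b, hab⟩ := exists_ends_eq ends e
  classical
  rw [endCount_eq_ite hab (hl.ne hab)]
  by_cases ha : a ∈ Z <;> by_cases hb : b ∈ Z <;> simp [mem_cut_iff_of_ends_eq hab, ha, hb]

lemma sum_card_edgesAt_mod_two [DecidableEq E] (hl : NoLoops ends) (Z : Finset V)
    (F : Finset E) :
    (∑ v ∈ Z, #(edgesAt ends F v)) % 2 = #(F ∩ cut ends Z) % 2 := by
  rw [sum_card_edgesAt, sum_nat_mod, sum_congr rfl fun e _ => endCount_mod_two hl Z e,
    ← card_filter, filter_mem_eq_inter]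

lemma IsTwoFactor.even_card_inter_cut [DecidableEq E] (hl : NoLoops ends) {F : Finset E}
    (hF : IsTwoFactor ends F) (Z : Finset V) : Even #(F ∩ cut ends Z) := by
  rw [Nat.even_iff, ← sum_card_edgesAt_mod_two hl, sum_congr rfl fun v _ => hF.card_edgesAt v]
  simp

lemma IsCubic.card_edgesAt (hc : IsCubic ends) (v : V) : #(edgesAt ends univ v) = 3 := by
  rw [← hc v, ← Set.ncard_coe_finset]
  simp [edgesAt]

lemma IsCubic.card_cut_mod_two (hl : NoLoops ends) (hc : IsCubic ends) (Z : Finset V) :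
    #(cut ends Z) % 2 = #Z % 2 := by
  classical
  have hparity := sum_card_edgesAt_mod_two hl Z univ
  rw [sum_congr rfl fun v _ => hc.card_edgesAt v, sum_const, smul_eq_mul, univ_inter] at hparity
  omega

lemma Bridgeless.card_cut_ne_one (hb : Bridgeless ends) (Z : Finset V) : #(cut ends Z) ≠ 1 := by
  intro hone
  obtain ⟨e, he⟩ := card_eq_one.1 hone
  obtain ⟨a, ha, b, hbZ, hab⟩ := mem_cut.1 (he ▸ mem_singleton_self e)
  refine hbZ ((hb e a b hab).mem_of_closed (Z := Z) ?_ ha)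
  intro f hfe x y hxy
  have hf : f ∉ cut ends Z := by simpa [he] using hfe
  exact (not_not.1 ((mem_cut_iff_of_ends_eq hxy).not.1 hf)).1

lemma IsCubic.three_le_card_cut (hl : NoLoops ends) (hc : IsCubic ends) (hb : Bridgeless ends)
    {Z : Finset V} (hZ : Odd #Z) : 3 ≤ #(cut ends Z) := by
  have hparity := hc.card_cut_mod_two hl Z
  have hne := hb.card_cut_ne_one Z
  rw [Nat.odd_iff] at hZ
  omega

end Cuts

lemma IsCubic.even_card [Finite V] [Finite E] (hl : NoLoops ends) (hc : IsCubic ends) :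
    Even (Nat.card V) := by
  cases nonempty_fintype V
  cases nonempty_fintype E
  have hcut : cut ends (univ : Finset V) = ∅ := by
    ext e
    simp [mem_cut]
  have hparity := hc.card_cut_mod_two hl univ
  rw [hcut, card_empty, card_univ, ← Nat.card_eq_fintype_card] at hparity
  exact Nat.even_iff.2 hparity.symm

lemma IsTwoFactor.mem_or_mem [Finite E] (hc : IsCubic ends) {F : Finset E} (hF : IsTwoFactor ends F)
    {v : V} {e f : E} (hne : e ≠ f) (hve : v ∈ ends e) (hvf : v ∈ ends f) : e ∈ F ∨ f ∈ F := by
  classical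
  cases nonempty_fintype E
  by_contra! hnot
  have hdisj : Disjoint (edgesAt ends F v) {e, f} := by
    simp [mem_edgesAt, hnot]
  have hsub : edgesAt ends F v ∪ {e, f} ⊆ edgesAt ends univ v := by
    intro g hg
    simp only [mem_union, mem_insert, mem_singleton, mem_edgesAt] at hg ⊢
    rcases hg with hg | rfl | rfl <;> simp [*]
  have hcard := card_le_card hsub
  rw [card_union_of_disjoint hdisj, hF.card_edgesAt, hc.card_edgesAt, card_pair hne] at hcard
  omega

lemma IsCubic.exists_ne_and_exists_ne [Finite E] (hc : IsCubic ends) (v : V) (e : E) :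
    ∃ f g, f ≠ g ∧ (f ≠ e ∧ v ∈ ends f) ∧ g ≠ e ∧ v ∈ ends g := by
  classical
  cases nonempty_fintype E
  have hcard : 1 < #((edgesAt ends univ v).erase e) := by
    have hpred := pred_card_le_card_erase (s := edgesAt ends univ v) (a := e)
    rw [hc.card_edgesAt] at hpred
    omega
  obtain ⟨f, hf, g, hg, hne⟩ := one_lt_card.1 hcard
  simp only [mem_erase, mem_edgesAt, mem_univ, true_and] at hf hg
  exact ⟨f, g, hne, hf, hg⟩

section Barriers

/-- A Tutte barrier of `G`: a vertex set `S` together with a family `P` of odd sets, each a union of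
components of `G - S`, with at least two more members than `S` has elements. The excess is two
rather than one because only graphs of even order are considered. -/
structure IsBarrier (G : SimpleGraph V) (S : Finset V) (P : Finset (Finset V)) : Prop where
  card_add_two_le : #S + 2 ≤ #P
  odd_card : ∀ O ∈ P, Odd #O
  disjoint : ∀ O ∈ P, Disjoint O S
  pairwiseDisjoint : (P : Set (Finset V)).PairwiseDisjoint id
  mem_of_adj : ∀ O ∈ P, ∀ a ∈ O, ∀ b ∉ O, G.Adj a b → b ∈ S

lemma IsBarrier.eq_of_mem {G : SimpleGraph V} {S : Finset V} {P : Finset (Finset V)}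
    (hP : IsBarrier G S P) {O O' : Finset V} (hO : O ∈ P) (hO' : O' ∈ P) {v : V} (hv : v ∈ O)
    (hv' : v ∈ O') : O = O' :=
  hP.pairwiseDisjoint.elim_finset hO hO' v hv hv'

lemma ncard_add_two_le_of_isTutteViolator [Finite V] {G : SimpleGraph V} (hV : Even (Nat.card V))
    {u : Set V} (hu : G.IsTutteViolator u) :
    u.ncard + 2 ≤ ((⊤ : G.Subgraph).deleteVerts u).coe.oddComponents.ncard := by
  have hverts : Nat.card ((⊤ : G.Subgraph).deleteVerts u).verts + u.ncard = Nat.card V := by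
    rw [SimpleGraph.Subgraph.deleteVerts_verts, SimpleGraph.Subgraph.verts_top,
      ← Set.compl_eq_univ_sdiff, Nat.card_coe_set_eq, add_comm, Set.ncard_add_ncard_compl]
  have hodd := SimpleGraph.odd_ncard_oddComponents ((⊤ : G.Subgraph).deleteVerts u).coe
  rw [SimpleGraph.IsTutteViolator] at hu
  grind

lemma exists_isBarrier_of_isTutteViolator [Finite V] {G : SimpleGraph V} (hV : Even (Nat.card V))
    {u : Set V} (hu : G.IsTutteViolator u) : ∃ S P, IsBarrier G S P := by
  classical
  cases nonempty_fintype V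
  set H := ((⊤ : G.Subgraph).deleteVerts u).coe
  let vertexSet (K : H.ConnectedComponent) : Finset V := K.supp.toFinset.map (.subtype _)
  have mem_vertexSet {K v} : v ∈ vertexSet K ↔ ∃ h, ⟨v, h⟩ ∈ K.supp := by simp [vertexSet]
  have eq_of_mem {K K' v} (hv : v ∈ vertexSet K) (hv' : v ∈ vertexSet K') : K = K' := by
    obtain ⟨_, hv⟩ := mem_vertexSet.1 hv
    obtain ⟨_, hv'⟩ := mem_vertexSet.1 hv'
    exact SimpleGraph.ConnectedComponent.eq_of_common_vertex hv hv'
  have card_vertexSet K : #(vertexSet K) = K.supp.ncard := by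
    rw [card_map, Set.ncard_eq_toFinset_card']
  have vertexSet_injective : Function.Injective vertexSet := by
    intro K K' hKK'
    obtain ⟨⟨x, hxu⟩, hx⟩ := K.nonempty_supp
    have hxK := mem_vertexSet.2 ⟨hxu, hx⟩
    exact eq_of_mem hxK (hKK' ▸ hxK)
  refine ⟨u.toFinset, H.oddComponents.toFinset.image vertexSet, ?_, ?_, ?_, ?_, ?_⟩
  · rw [card_image_of_injective _ vertexSet_injective, ← Set.ncard_eq_toFinset_card',
      ← Set.ncard_eq_toFinset_card']
    exact ncard_add_two_le_of_isTutteViolator hV hu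
  · simp only [forall_mem_image, Set.mem_toFinset, card_vertexSet]
    exact fun K hK => hK
  · simp only [forall_mem_image, disjoint_left, Set.mem_toFinset]
    intro K _ v hv hvu
    obtain ⟨h, -⟩ := mem_vertexSet.1 hv
    exact h.2 hvu
  · rintro _ hO _ hO' hne
    obtain ⟨K, -, rfl⟩ := mem_image.1 hO
    obtain ⟨K', -, rfl⟩ := mem_image.1 hO'
    exact disjoint_left.2 fun v hv hv' => hne (congrArg vertexSet (eq_of_mem hv hv'))
  · simp only [forall_mem_image, Set.mem_toFinset]
    intro K _ a ha b hb hab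
    by_contra hbu
    obtain ⟨hau, haK⟩ := mem_vertexSet.1 ha
    have hbv : b ∈ ((⊤ : G.Subgraph).deleteVerts u).verts := ⟨trivial, hbu⟩
    refine hb (mem_vertexSet.2 ⟨hbv, K.mem_supp_of_adj_mem_supp haK ?_⟩)
    simp only [H, SimpleGraph.Subgraph.coe_adj, SimpleGraph.Subgraph.deleteVerts_adj]
    exact ⟨trivial, hau.2, trivial, hbu, hab⟩

/-- The simple graph underlying the multigraph obtained by deleting the edges in `D`. -/
def deleteEdges (ends : E → Sym2 V) (D : Finset E) : SimpleGraph V :=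
  SimpleGraph.fromEdgeSet (ends '' (D : Set E)ᶜ)

lemma deleteEdges_adj {D : Finset E} {a b : V} :
    (deleteEdges ends D).Adj a b ↔ (∃ e ∉ D, ends e = s(a, b)) ∧ a ≠ b := by
  simp [deleteEdges]

lemma exists_isPerfectMatching_of_deleteEdges {D : Finset E}
    {N : (deleteEdges ends D).Subgraph} (hN : N.IsPerfectMatching) :
    ∃ M : Set E, IsPerfectMatching ends M ∧ Disjoint M D := by
  have hsurj : Set.SurjOn ends (D : Set E)ᶜ N.edgeSet := fun p hp => by
    have hp' : p ∈ (deleteEdges ends D).edgeSet := N.edgeSet_subset hp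
    rw [deleteEdges, SimpleGraph.edgeSet_fromEdgeSet] at hp'
    exact hp'.1
  obtain ⟨M, hMD, hbij⟩ := hsurj.exists_bijOn_subset
  refine ⟨M, fun v => ?_, Set.subset_compl_iff_disjoint_right.1 hMD⟩
  obtain ⟨w, hvw, hunique⟩ := SimpleGraph.Subgraph.isPerfectMatching_iff.1 hN v
  obtain ⟨e, heM, he⟩ := hbij.surjOn (SimpleGraph.Subgraph.mem_edgeSet.2 hvw)
  refine ⟨e, ⟨heM, by simp [he]⟩, fun f ⟨hfM, hvf⟩ => hbij.injOn hfM heM ?_⟩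
  obtain ⟨x, hx⟩ := Sym2.mem_iff_exists.1 hvf
  have hvx : N.Adj v x := by simpa [hx] using hbij.mapsTo hfM
  rw [hx, he, hunique x hvx]

lemma IsPerfectMatching.isTwoFactor_compl (hc : IsCubic ends) {M : Set E}
    (hM : IsPerfectMatching ends M) : IsTwoFactor ends Mᶜ := by
  intro v
  obtain ⟨e, ⟨heM, hve⟩, hunique⟩ := hM v
  have herase : {f | f ∈ Mᶜ ∧ v ∈ ends f} = {f | v ∈ ends f} \ {e} := by
    ext f
    simp only [Set.mem_ofPred_eq, Set.mem_compl_iff, Set.mem_sdiff, Set.mem_singleton_iff]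
    grind
  have he : e ∈ {f | v ∈ ends f} := hve
  rw [herase, Set.ncard_sdiff_singleton_of_mem he, hc v]

lemma IsCubic.exists_isTwoFactor_or_exists_isBarrier [Finite V] [Finite E]
    (hl : NoLoops ends) (hc : IsCubic ends) (D : Finset E) :
    (∃ F : Finset E, IsTwoFactor ends F ∧ D ⊆ F) ∨ ∃ S P, IsBarrier (deleteEdges ends D) S P := by
  classical
  cases nonempty_fintype E
  by_cases hpm : ∃ N : (deleteEdges ends D).Subgraph, N.IsPerfectMatching
  · obtain ⟨N, hN⟩ := hpm
    obtain ⟨M, hM, hMD⟩ := exists_isPerfectMatching_of_deleteEdges hN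
    refine .inl ⟨Mᶜ.toFinset, by simpa using hM.isTwoFactor_compl hc, fun e he => ?_⟩
    simpa using fun heM => Set.disjoint_left.1 hMD heM he
  · rw [SimpleGraph.tutte] at hpm
    push Not at hpm
    obtain ⟨u, hu⟩ := hpm
    exact .inr (exists_isBarrier_of_isTutteViolator (hc.even_card hl) hu)

variable [Fintype E]

lemma card_filter_mem_cut_le_endCount [DecidableEq E] {P : Finset (Finset V)}
    (hP : (P : Set (Finset V)).PairwiseDisjoint id) {T : Finset V} {e : E}
    (hT : ∀ O ∈ P, ∀ a ∈ O, ∀ b ∉ O, ends e = s(a, b) → b ∈ T) :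
    #{O ∈ P | e ∈ cut ends O} ≤ endCount ends T e := by
  refine card_le_card_of_forall_subsingleton
    (fun O b => ∃ a ∈ O, b ∉ O ∧ ends e = s(a, b)) ?_ ?_
  · intro O hO
    obtain ⟨hOP, he⟩ := mem_filter.1 hO
    obtain ⟨a, ha, b, hb, hab⟩ := mem_cut.1 he
    exact ⟨b, by simp [hT O hOP a ha b hb hab, hab], a, ha, hb, hab⟩
  · rintro b - O ⟨hO, a, ha, -, hab⟩ O' ⟨hO', a', ha', -, hab'⟩
    have haa' : a = a' := Sym2.congr_left.1 (hab.symm.trans hab')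
    exact hP.elim_finset (mem_filter.1 hO).1 (mem_filter.1 hO').1 a ha (haa' ▸ ha')

lemma sum_card_cut [DecidableEq E] (P : Finset (Finset V)) :
    ∑ O ∈ P, #(cut ends O) = ∑ e, #{O ∈ P | e ∈ cut ends O} := by
  have hdouble := sum_card_bipartiteAbove_eq_sum_card_bipartiteBelow
    (s := P) (t := (univ : Finset E)) fun O e => e ∈ cut ends O
  simpa only [bipartiteAbove, bipartiteBelow, filter_univ_mem] using hdouble

lemma IsCubic.sum_endCount_add [DecidableEq E] (hc : IsCubic ends) (S : Finset V)
    (D : Finset E) :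
    ∑ e, (endCount ends S e + if e ∈ D then 2 else 0) = 3 * #S + 2 * #D := by
  rw [sum_add_distrib, ← sum_card_edgesAt, sum_congr rfl fun v _ => hc.card_edgesAt v,
    sum_ite_mem, univ_inter, sum_const, sum_const, smul_eq_mul, smul_eq_mul, mul_comm 3,
    mul_comm 2]

namespace IsBarrier

variable {D : Finset E} {S : Finset V} {P : Finset (Finset V)}

lemma card_filter_mem_cut_le [DecidableEq E] (hl : NoLoops ends)
    (hP : IsBarrier (deleteEdges ends D) S P) (e : E) :
    #{O ∈ P | e ∈ cut ends O} ≤ endCount ends S e + if e ∈ D then 2 else 0 := by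
  classical
  obtain ⟨x, y, hxy⟩ := exists_ends_eq ends e
  have hne := hl.ne hxy
  split_ifs with heD
  · have hcount : #{O ∈ P | e ∈ cut ends O} ≤ endCount ends {x, y} e := by
      refine card_filter_mem_cut_le_endCount hP.pairwiseDisjoint fun O _ a _ b _ hab => ?_
      rw [hxy, Sym2.eq_iff] at hab
      grind
    rw [endCount_eq_ite hxy hne] at hcount
    grind
  · refine card_filter_mem_cut_le_endCount hP.pairwiseDisjoint fun O hO a ha b hb hab => ?_
    exact hP.mem_of_adj O hO a ha b hb (deleteEdges_adj.2 ⟨⟨e, heD, hab⟩, hl.ne hab⟩)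

lemma sum_card_cut_le (hl : NoLoops ends) (hc : IsCubic ends)
    (hP : IsBarrier (deleteEdges ends D) S P) :
    ∑ O ∈ P, #(cut ends O) ≤ 3 * #S + 2 * #D := by
  classical
  rw [sum_card_cut, ← hc.sum_endCount_add]
  exact sum_le_sum fun e _ => hP.card_filter_mem_cut_le hl e

lemma three_mul_card_le_sum_card_cut (hl : NoLoops ends) (hc : IsCubic ends)
    (hb : Bridgeless ends) (hP : IsBarrier (deleteEdges ends D) S P) :
    3 * #P ≤ ∑ O ∈ P, #(cut ends O) := by
  rw [mul_comm]
  exact card_nsmul_le_sum P _ 3 fun O hO => hc.three_le_card_cut hl hb (hP.odd_card O hO)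

lemma card_cut_eq_three (hl : NoLoops ends) (hc : IsCubic ends) (hb : Bridgeless ends)
    (hP : IsBarrier (deleteEdges ends D) S P) (hD : #D ≤ 3) {O : Finset V} (hO : O ∈ P) :
    #(cut ends O) = 3 := by
  have hupper := hP.sum_card_cut_le hl hc
  have hlower := hP.three_mul_card_le_sum_card_cut hl hc hb
  have hsize := hP.card_add_two_le
  have htight : ∑ O ∈ P, 3 = ∑ O ∈ P, #(cut ends O) := by
    rw [sum_const, smul_eq_mul]
    omega
  have hle : ∀ O ∈ P, 3 ≤ #(cut ends O) :=
    fun O hO => hc.three_le_card_cut hl hb (hP.odd_card O hO)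
  exact ((sum_eq_sum_iff_of_le hle).1 htight O hO).symm

lemma card_filter_mem_cut_eq [DecidableEq E] (hl : NoLoops ends) (hc : IsCubic ends)
    (hb : Bridgeless ends) (hP : IsBarrier (deleteEdges ends D) S P) (hD : #D ≤ 3) (e : E) :
    #{O ∈ P | e ∈ cut ends O} = endCount ends S e + if e ∈ D then 2 else 0 := by
  have hlower := hP.three_mul_card_le_sum_card_cut hl hc hb
  have hupper := hP.sum_card_cut_le hl hc
  have hsize := hP.card_add_two_le
  have htight : ∑ e, #{O ∈ P | e ∈ cut ends O} =
      ∑ e, (endCount ends S e + if e ∈ D then 2 else 0) := by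
    rw [← sum_card_cut, hc.sum_endCount_add]
    omega
  exact (sum_eq_sum_iff_of_le fun e _ => hP.card_filter_mem_cut_le hl e).1 htight e (mem_univ e)

end IsBarrier

end Barriers

lemma Bridgeless.exists_isTwoFactor_of_card_le_two [Finite V] [Finite E] (hl : NoLoops ends)
    (hc : IsCubic ends) (hb : Bridgeless ends) {D : Finset E} (hD : #D ≤ 2) :
    ∃ F : Finset E, IsTwoFactor ends F ∧ D ⊆ F := by
  classical
  cases nonempty_fintype E
  obtain hF | ⟨S, P, hP⟩ := hc.exists_isTwoFactor_or_exists_isBarrier hl D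
  · exact hF
  · have hlower := hP.three_mul_card_le_sum_card_cut hl hc hb
    have hupper := hP.sum_card_cut_le hl hc
    have hsize := hP.card_add_two_le
    omega

section Components

lemma disjoint_cut_sdiff [Fintype E] [DecidableEq V] {F : Finset E} {Z C : Finset V}
    (hZ : Disjoint F (cut ends Z)) (hC : Disjoint F (cut ends C)) :
    Disjoint F (cut ends (Z \ C)) := by
  rw [disjoint_left] at *
  exact fun e he heZC => hZ he (mem_cut_of_mem_cut_sdiff heZC (hC he))

lemma IsTwoFactor.disjoint_cut_of_forall_exists [Fintype E] {F : Finset E}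
    (hF : IsTwoFactor ends F) {Z : Finset V}
    (hZ : ∀ v ∈ Z, ∃ e ∈ F, ∃ f ∈ F, e ≠ f ∧ (v ∈ ends e ∧ e ∉ cut ends Z) ∧
      v ∈ ends f ∧ f ∉ cut ends Z) : Disjoint F (cut ends Z) := by
  classical
  rw [disjoint_left]
  intro g hgF hg
  obtain ⟨v, hvZ, hvg⟩ := exists_mem_ends_of_mem_cut hg
  obtain ⟨e, he, f, hf, hne, ⟨hve, heZ⟩, hvf, hfZ⟩ := hZ v hvZ
  have hmem : g ∈ edgesAt ends F v := mem_edgesAt.2 ⟨hgF, hvg⟩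
  rw [hF.edgesAt_eq_pair he hf hne hve hvf, mem_insert, mem_singleton] at hmem
  rcases hmem with rfl | rfl <;> contradiction

namespace TwoFactorsAllC5

lemma exists_component [Finite V] [Fintype E] (h5 : TwoFactorsAllC5 ends) {F : Finset E}
    (hF : IsTwoFactor ends F) (v : V) :
    ∃ C : Finset V, v ∈ C ∧ #C = 5 ∧ Disjoint F (cut ends C) ∧
      ∀ Z : Finset V, v ∈ Z → Disjoint F (cut ends Z) → C ⊆ Z := by
  have hfin : (component ends (F : Set E) v).Finite := Set.toFinite _
  refine ⟨hfin.toFinset, ?_, ?_, ?_, fun Z hv hZ w hw => ?_⟩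
  · exact hfin.mem_toFinset.2 Relation.ReflTransGen.refl
  · rw [← Set.ncard_eq_toFinset_card, h5 F hF v]
  · rw [disjoint_left]
    intro e heF he
    obtain ⟨a, ha, b, hb, hab⟩ := mem_cut.1 he
    rw [Set.Finite.mem_toFinset] at ha hb
    exact hb (Relation.ReflTransGen.tail ha ⟨e, heF, hab⟩)
  · rw [Set.Finite.mem_toFinset] at hw
    refine Reach.mem_of_closed (Z := Z) (fun e he a b hab => ?_) hw hv
    exact (mem_iff_mem_of_disjoint_cut hZ he hab).1

lemma five_dvd_card [Finite V] [Fintype E] (h5 : TwoFactorsAllC5 ends) {F : Finset E}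
    (hF : IsTwoFactor ends F) {Z : Finset V} (hZ : Disjoint F (cut ends Z)) : 5 ∣ #Z := by
  classical
  induction Z using Finset.strongInduction with
  | H Z ih =>
    obtain rfl | ⟨v, hv⟩ := Z.eq_empty_or_nonempty
    · simp
    · obtain ⟨C, hvC, hC5, hC, hmin⟩ := h5.exists_component hF v
      have hCZ := hmin Z hv hZ
      have hdvd := ih (Z \ C) (sdiff_ssubset hCZ ⟨v, hvC⟩) (disjoint_cut_sdiff hZ hC)
      have hcard := card_sdiff_add_card_eq_card hCZ
      omega

lemma injective_ends [Finite V] [Finite E] (hl : NoLoops ends) (hc : IsCubic ends)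
    (hb : Bridgeless ends) (h5 : TwoFactorsAllC5 ends) : Function.Injective ends := by
  classical
  cases nonempty_fintype E
  intro e f hef
  by_contra hne
  obtain ⟨F, hF, hD⟩ := hb.exists_isTwoFactor_of_card_le_two hl hc (card_pair hne).le
  simp only [insert_subset_iff, singleton_subset_iff] at hD
  obtain ⟨a, b, hab⟩ := exists_ends_eq ends e
  have hdisj : Disjoint F (cut ends {a, b}) := by
    refine hF.disjoint_cut_of_forall_exists fun v hv => ⟨e, hD.1, f, hD.2, hne, ?_⟩
    simpa [mem_cut_iff_of_ends_eq hab, mem_cut_iff_of_ends_eq (hef.symm.trans hab), ← hef, hab]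
      using hv
  have hdvd := h5.five_dvd_card hF hdisj
  rw [card_pair (hl.ne hab)] at hdvd
  omega

end TwoFactorsAllC5

end Components

section ThreeEdgeCuts

variable [Fintype E]

lemma Bridgeless.exists_isTwoFactor_inter_cut_eq [Finite V] [DecidableEq E] (hl : NoLoops ends)
    (hc : IsCubic ends) (hb : Bridgeless ends) {X : Finset V} (hX : #(cut ends X) = 3) {e₁ e₂ : E}
    (he₁ : e₁ ∈ cut ends X) (he₂ : e₂ ∈ cut ends X) (hne : e₁ ≠ e₂) :
    ∃ F : Finset E, IsTwoFactor ends F ∧ F ∩ cut ends X = {e₁, e₂} := by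
  obtain ⟨F, hF, hD⟩ := hb.exists_isTwoFactor_of_card_le_two hl hc (card_pair hne).le
  refine ⟨F, hF, (eq_of_subset_of_card_le ?_ ?_).symm⟩
  · exact subset_inter hD (by simp [insert_subset_iff, he₁, he₂])
  · have heven := hF.even_card_inter_cut hl X
    have hle : #(F ∩ cut ends X) ≤ 3 := hX ▸ card_le_card inter_subset_right
    rw [card_pair hne]
    grind

section TwoCutEdges

variable [DecidableEq E] {F : Finset E} {X C : Finset V} {e₁ e₂ : E} {x₁ x₂ : V}

lemma IsTwoFactor.mem_of_inter_cut_eq (hl : NoLoops ends) (hF : IsTwoFactor ends F)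
    (hcut : F ∩ cut ends X = {e₁, e₂}) (hx₁ : x₁ ∈ X) (hxe₁ : x₁ ∈ ends e₁) (hx₂ : x₂ ∈ X)
    (hxe₂ : x₂ ∈ ends e₂) (hC : Disjoint F (cut ends C)) (hx₁C : x₁ ∈ C) : x₂ ∈ C := by
  classical
  have mem_iff {g} : g ∈ F ∧ g ∈ cut ends X ↔ g = e₁ ∨ g = e₂ := by
    rw [← mem_inter, hcut, mem_insert, mem_singleton]
  obtain ⟨he₁F, he₁X⟩ := mem_iff.2 (.inl rfl)
  obtain ⟨-, he₂X⟩ := mem_iff.2 (.inr rfl)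
  obtain ⟨z, hz⟩ := Sym2.mem_iff_exists.1 hxe₁
  have hzX : z ∉ X := by simpa [mem_cut_iff_of_ends_eq hz, hx₁] using he₁X
  have he₁XC : e₁ ∈ F ∩ cut ends (X ∩ C) := by
    simp [mem_cut_iff_of_ends_eq hz, he₁F, hx₁, hx₁C, hzX]
  have htwo : 1 < #(F ∩ cut ends (X ∩ C)) := by
    have heven := hF.even_card_inter_cut hl (X ∩ C)
    have hpos := card_ne_zero_of_mem he₁XC
    grind
  obtain ⟨g, hg, hge₁⟩ := Finset.exists_mem_ne htwo e₁
  obtain ⟨hgF, hgXC⟩ := mem_inter.1 hg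
  have hgX := mem_cut_of_mem_cut_inter hgXC (disjoint_left.1 hC hgF)
  obtain rfl : g = e₂ := (mem_iff.1 ⟨hgF, hgX⟩).resolve_left hge₁
  obtain ⟨a, ha, hae⟩ := exists_mem_ends_of_mem_cut hgXC
  rw [mem_inter] at ha
  exact eq_of_mem_ends_of_mem_cut he₂X ha.1 hx₂ hae hxe₂ ▸ ha.2

namespace TwoFactorsAllC5

variable [Finite V]

-- The component of `F` through `e₁` is the only one that crosses `cut ends X`, so all other
-- components together contribute a multiple of five to `#X`.
lemma exists_component_of_inter_cut_eq [DecidableEq V] (hl : NoLoops ends)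
    (h5 : TwoFactorsAllC5 ends) (hF : IsTwoFactor ends F) (hcut : F ∩ cut ends X = {e₁, e₂})
    (hx₁ : x₁ ∈ X) (hxe₁ : x₁ ∈ ends e₁) (hx₂ : x₂ ∈ X) (hxe₂ : x₂ ∈ ends e₂) :
    ∃ C : Finset V, x₁ ∈ C ∧ x₂ ∈ C ∧ Disjoint F (cut ends C) ∧
      #(X ∩ C) % 5 = #X % 5 ∧ #(X ∩ C) < 5 := by
  have mem_iff {g} : g ∈ F ∧ g ∈ cut ends X ↔ g = e₁ ∨ g = e₂ := by
    rw [← mem_inter, hcut, mem_insert, mem_singleton]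
  obtain ⟨he₁F, he₁X⟩ := mem_iff.2 (.inl rfl)
  obtain ⟨-, he₂X⟩ := mem_iff.2 (.inr rfl)
  obtain ⟨C, hx₁C, hC5, hC, -⟩ := h5.exists_component hF x₁
  obtain ⟨z, hz⟩ := Sym2.mem_iff_exists.1 hxe₁
  have hzX : z ∉ X := by simpa [mem_cut_iff_of_ends_eq hz, hx₁] using he₁X
  have hzC : z ∈ C := (mem_iff_mem_of_disjoint_cut hC he₁F hz).1 hx₁C
  have hx₂C : x₂ ∈ C := hF.mem_of_inter_cut_eq hl hcut hx₁ hxe₁ hx₂ hxe₂ hC hx₁C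
  have hdiff : Disjoint F (cut ends (X \ C)) := by
    rw [disjoint_left]
    intro g hgF hg
    have hgX := mem_cut_of_mem_cut_sdiff hg (disjoint_left.1 hC hgF)
    obtain ⟨a, ha, hag⟩ := exists_mem_ends_of_mem_cut hg
    rw [mem_sdiff] at ha
    rcases mem_iff.1 ⟨hgF, hgX⟩ with rfl | rfl
    · exact ha.2 (eq_of_mem_ends_of_mem_cut hgX hx₁ ha.1 hxe₁ hag ▸ hx₁C)
    · exact ha.2 (eq_of_mem_ends_of_mem_cut hgX hx₂ ha.1 hxe₂ hag ▸ hx₂C)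
  have hdvd := h5.five_dvd_card hF hdiff
  have hcard := card_inter_add_card_sdiff X C
  have hlt : #(X ∩ C) < #C :=
    card_lt_card (ssubset_iff_of_subset inter_subset_right |>.2 ⟨z, hzC, by simp [hzX]⟩)
  exact ⟨C, hx₁C, hx₂C, hC, by omega, by omega⟩

lemma eq_of_card_mod_five_eq_one (hl : NoLoops ends) (h5 : TwoFactorsAllC5 ends)
    (hF : IsTwoFactor ends F) (hcut : F ∩ cut ends X = {e₁, e₂}) (hx₁ : x₁ ∈ X)
    (hxe₁ : x₁ ∈ ends e₁) (hx₂ : x₂ ∈ X) (hxe₂ : x₂ ∈ ends e₂) (hcard : #X % 5 = 1) : x₁ = x₂ := by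
  classical
  obtain ⟨C, hx₁C, hx₂C, -, hmod, hlt⟩ :=
    h5.exists_component_of_inter_cut_eq hl hF hcut hx₁ hxe₁ hx₂ hxe₂
  have hone : #(X ∩ C) = 1 := by omega
  exact card_le_one.1 hone.le x₁ (by simp [hx₁, hx₁C]) x₂ (by simp [hx₂, hx₂C])

lemma exists_ends_eq_of_card_mod_five_eq_two (hl : NoLoops ends)
    (h5 : TwoFactorsAllC5 ends) (hF : IsTwoFactor ends F) (hcut : F ∩ cut ends X = {e₁, e₂})
    (hne : e₁ ≠ e₂) (hx₁ : x₁ ∈ X) (hxe₁ : x₁ ∈ ends e₁) (hx₂ : x₂ ∈ X) (hxe₂ : x₂ ∈ ends e₂)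
    (hcard : #X % 5 = 2) : ∃ g ∈ F, ends g = s(x₁, x₂) := by
  classical
  have mem_iff {g} : g ∈ F ∧ g ∈ cut ends X ↔ g = e₁ ∨ g = e₂ := by
    rw [← mem_inter, hcut, mem_insert, mem_singleton]
  obtain ⟨he₁F, -⟩ := mem_iff.2 (.inl rfl)
  obtain ⟨he₂F, he₂X⟩ := mem_iff.2 (.inr rfl)
  have hx₁₂ : x₁ ≠ x₂ := by
    rintro rfl
    have hclosed := disjoint_cut_erase hx₁
      (hcut.trans (hF.edgesAt_eq_pair he₁F he₂F hne hxe₁ hxe₂).symm)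
    have hdvd := h5.five_dvd_card hF hclosed
    rw [card_erase_of_mem hx₁] at hdvd
    omega
  obtain ⟨C, hx₁C, hx₂C, hC, hmod, hlt⟩ :=
    h5.exists_component_of_inter_cut_eq hl hF hcut hx₁ hxe₁ hx₂ hxe₂
  have htrace : {x₁, x₂} = X ∩ C :=
    eq_of_subset_of_card_le (by simp [insert_subset_iff, *]) (by rw [card_pair hx₁₂]; omega)
  obtain ⟨g, hgF, hge₁, hxg⟩ := hF.exists_mem_ne x₁ e₁
  obtain ⟨y, hy⟩ := Sym2.mem_iff_exists.1 hxg
  have hgX : g ∉ cut ends X := by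
    intro hgX
    obtain rfl := (mem_iff.1 ⟨hgF, hgX⟩).resolve_left hge₁
    exact hx₁₂ (eq_of_mem_ends_of_mem_cut he₂X hx₁ hx₂ hxg hxe₂)
  have hyX : y ∈ X := by simpa [mem_cut_iff_of_ends_eq hy, hx₁] using hgX
  have hyC : y ∈ C := (mem_iff_mem_of_disjoint_cut hC hgF hy).1 hx₁C
  have hyx : y ∈ ({x₁, x₂} : Finset V) := htrace ▸ mem_inter.2 ⟨hyX, hyC⟩
  rw [mem_insert, mem_singleton] at hyx
  exact ⟨g, hgF, hyx.resolve_left (hl.ne hy).symm ▸ hy⟩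

end TwoFactorsAllC5

end TwoCutEdges

namespace TwoFactorsAllC5

lemma card_mod_five_ne_zero [Finite V] (hl : NoLoops ends) (hc : IsCubic ends)
    (hb : Bridgeless ends) (h5 : TwoFactorsAllC5 ends) {X : Finset V} (hX : #(cut ends X) = 3) :
    #X % 5 ≠ 0 := by
  classical
  obtain ⟨e₁, he₁, e₂, he₂, hne⟩ := one_lt_card.1 (by omega : 1 < #(cut ends X))
  obtain ⟨F, hF, hcut⟩ := hb.exists_isTwoFactor_inter_cut_eq hl hc hX he₁ he₂ hne
  obtain ⟨x₁, hx₁, hxe₁⟩ := exists_mem_ends_of_mem_cut he₁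
  obtain ⟨x₂, hx₂, hxe₂⟩ := exists_mem_ends_of_mem_cut he₂
  obtain ⟨C, hx₁C, -, -, hmod, hlt⟩ :=
    h5.exists_component_of_inter_cut_eq hl hF hcut hx₁ hxe₁ hx₂ hxe₂
  have hpos : 0 < #(X ∩ C) := card_pos.2 ⟨x₁, mem_inter.2 ⟨hx₁, hx₁C⟩⟩
  omega

lemma card_mod_five_ne_two [Finite V] (hl : NoLoops ends) (hc : IsCubic ends)
    (hb : Bridgeless ends) (h5 : TwoFactorsAllC5 ends) {X : Finset V} (hX : #(cut ends X) = 3) :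
    #X % 5 ≠ 2 := by
  classical
  intro hmod
  obtain ⟨e₁, e₂, e₃, hne₁₂, hne₁₃, hne₂₃, hcutX⟩ := card_eq_three.1 hX
  have he₁ : e₁ ∈ cut ends X := by simp [hcutX]
  have he₂ : e₂ ∈ cut ends X := by simp [hcutX]
  have he₃ : e₃ ∈ cut ends X := by simp [hcutX]
  obtain ⟨x₁, hx₁, hxe₁⟩ := exists_mem_ends_of_mem_cut he₁
  obtain ⟨x₂, hx₂, hxe₂⟩ := exists_mem_ends_of_mem_cut he₂
  obtain ⟨x₃, hx₃, hxe₃⟩ := exists_mem_ends_of_mem_cut he₃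
  have joined {e f x y} (he : e ∈ cut ends X) (hf : f ∈ cut ends X) (hne : e ≠ f) (hx : x ∈ X)
      (hxe : x ∈ ends e) (hy : y ∈ X) (hyf : y ∈ ends f) : ∃ F : Finset E,
        IsTwoFactor ends F ∧ F ∩ cut ends X = {e, f} ∧ ∃ g ∈ F, ends g = s(x, y) := by
    obtain ⟨F, hF, hcut⟩ := hb.exists_isTwoFactor_inter_cut_eq hl hc hX he hf hne
    exact ⟨F, hF, hcut,
      h5.exists_ends_eq_of_card_mod_five_eq_two hl hF hcut hne hx hxe hy hyf hmod⟩
  obtain ⟨F, hF, hcut, g₁₂, hg₁₂F, hg₁₂⟩ := joined he₁ he₂ hne₁₂ hx₁ hxe₁ hx₂ hxe₂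
  obtain ⟨-, -, -, g₁₃, -, hg₁₃⟩ := joined he₁ he₃ hne₁₃ hx₁ hxe₁ hx₃ hxe₃
  obtain ⟨-, -, -, g₂₃, -, hg₂₃⟩ := joined he₂ he₃ hne₂₃ hx₂ hxe₂ hx₃ hxe₃
  have hg₁₂X : g₁₂ ∉ cut ends X := by simp [mem_cut_iff_of_ends_eq hg₁₂, hx₁, hx₂]
  have hg₁₃X : g₁₃ ∉ cut ends X := by simp [mem_cut_iff_of_ends_eq hg₁₃, hx₁, hx₃]
  have he₁F : e₁ ∈ F := (mem_inter.1 (hcut ▸ mem_insert_self e₁ {e₂})).1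
  have he₃F : e₃ ∉ F := fun h => by
    have he₃' : e₃ ∈ F ∩ cut ends X := mem_inter.2 ⟨h, he₃⟩
    grind
  have hg₁₃F : g₁₃ ∈ F := (hF.mem_or_mem hc (ne_of_mem_of_not_mem he₃ hg₁₃X) hxe₃
    (by simp [hg₁₃])).resolve_left he₃F
  have hg₁₃mem : g₁₃ ∈ edgesAt ends F x₁ := mem_edgesAt.2 ⟨hg₁₃F, by simp [hg₁₃]⟩
  rw [hF.edgesAt_eq_pair he₁F hg₁₂F (ne_of_mem_of_not_mem he₁ hg₁₂X) hxe₁ (by simp [hg₁₂]),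
    mem_insert, mem_singleton] at hg₁₃mem
  rcases hg₁₃mem with rfl | rfl
  · exact hg₁₃X he₁
  · exact hl.ne hg₂₃ (Sym2.congr_right.1 (hg₁₂.symm.trans hg₁₃))

lemma card_eq_one_of_card_mod_five_eq_one [Finite V] (hl : NoLoops ends) (hc : IsCubic ends)
    (hb : Bridgeless ends) (hconn : Connected ends) (h5 : TwoFactorsAllC5 ends) {X : Finset V}
    (hX : #(cut ends X) = 3) (hmod : #X % 5 = 1) : #X = 1 := by
  classical
  cases nonempty_fintype V
  obtain ⟨e, he⟩ := card_pos.1 (by omega : 0 < #(cut ends X))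
  obtain ⟨x, hx, hxe⟩ := exists_mem_ends_of_mem_cut he
  have hstar : cut ends X = edgesAt ends univ x := by
    refine eq_of_subset_of_card_le (fun f hf => ?_) (by rw [hX, hc.card_edgesAt])
    obtain ⟨y, hy, hyf⟩ := exists_mem_ends_of_mem_cut hf
    rw [mem_edgesAt]
    refine ⟨mem_univ f, ?_⟩
    obtain rfl | hne := eq_or_ne e f
    · exact hxe
    · obtain ⟨F, hF, hcut⟩ := hb.exists_isTwoFactor_inter_cut_eq hl hc hX he hf hne
      exact h5.eq_of_card_mod_five_eq_one hl hF hcut hx hxe hy hyf hmod ▸ hyf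
  have hclosed := disjoint_cut_erase hx ((univ_inter _).trans hstar)
  have hempty : X.erase x = ∅ := by
    by_contra hnonempty
    have huniv := hconn.eq_univ_of_cut_eq_empty (disjoint_top.1 hclosed.symm)
      (nonempty_iff_ne_empty.2 hnonempty)
    exact notMem_erase x X (huniv ▸ mem_univ x)
  rw [← card_erase_add_one hx, hempty, card_empty]

lemma card_eq_one_or_card_compl_eq_one [Fintype V] [DecidableEq V] (hl : NoLoops ends)
    (hc : IsCubic ends) (hb : Bridgeless ends) (hconn : Connected ends)
    (h5 : TwoFactorsAllC5 ends) {X : Finset V} (hX : #(cut ends X) = 3) : #X = 1 ∨ #Xᶜ = 1 := by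
  have hX' : #(cut ends Xᶜ) = 3 := by rw [cut_compl, hX]
  have hdvd : 5 ∣ #(univ : Finset V) := by
    obtain ⟨F, hF, -⟩ := hb.exists_isTwoFactor_of_card_le_two hl hc (D := ∅) (by simp)
    refine h5.five_dvd_card hF (disjoint_left.2 fun e _ he => ?_)
    obtain ⟨a, -, b, hb, -⟩ := mem_cut.1 he
    exact hb (mem_univ b)
  have hsum := card_add_card_compl X
  rw [← card_univ] at hsum
  have hzero := h5.card_mod_five_ne_zero hl hc hb hX
  have htwo := h5.card_mod_five_ne_two hl hc hb hX
  have htwo' := h5.card_mod_five_ne_two hl hc hb hX'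
  by_cases hone : #X % 5 = 1
  · exact .inl (h5.card_eq_one_of_card_mod_five_eq_one hl hc hb hconn hX hone)
  · exact .inr (h5.card_eq_one_of_card_mod_five_eq_one hl hc hb hconn hX' (by omega))

end TwoFactorsAllC5

end ThreeEdgeCuts

section PathsOfLengthThree

lemma card_filter_mem_cut_eq_endCount [Fintype E] [DecidableEq V] [DecidableEq E]
    (hl : NoLoops ends) {P : Finset (Finset V)} (hP : ∀ O ∈ P, #O = 1) (e : E) :
    #{O ∈ P | e ∈ cut ends O} = endCount ends (P.biUnion id) e := by
  have himage : {O ∈ P | e ∈ cut ends O} =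
      {v ∈ P.biUnion id | v ∈ ends e}.image (singleton : V → Finset V) := by
    ext O
    simp only [mem_filter, mem_image, mem_biUnion, id_eq]
    constructor
    · rintro ⟨hO, he⟩
      obtain ⟨v, rfl⟩ := card_eq_one.1 (hP O hO)
      exact ⟨v, ⟨⟨{v}, hO, mem_singleton_self v⟩, (mem_cut_singleton hl).1 he⟩, rfl⟩
    · rintro ⟨v, ⟨⟨O', hO', hvO'⟩, hve⟩, rfl⟩
      obtain ⟨x, rfl⟩ := card_eq_one.1 (hP O' hO')
      obtain rfl := mem_singleton.1 hvO'
      exact ⟨hO', (mem_cut_singleton hl).2 hve⟩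
  rw [himage, card_image_of_injective _ singleton_injective, endCount]
  congr!

namespace IsBarrier

variable {D : Finset E} {S : Finset V} {P : Finset (Finset V)}

lemma card_eq_one [Finite V] [Finite E] (hl : NoLoops ends) (hc : IsCubic ends)
    (hb : Bridgeless ends) (hconn : Connected ends) (h5 : TwoFactorsAllC5 ends)
    (hP : IsBarrier (deleteEdges ends D) S P) (hD : #D ≤ 3) (hD' : ∀ t, ∃ e ∈ D, t ∉ ends e)
    {O : Finset V} (hO : O ∈ P) : #O = 1 := by
  classical
  cases nonempty_fintype V
  cases nonempty_fintype E
  refine (h5.card_eq_one_or_card_compl_eq_one hl hc hb hconn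
    (hP.card_cut_eq_three hl hc hb hD hO)).resolve_right fun hcompl => ?_
  obtain ⟨t, ht⟩ := Finset.card_eq_one.1 hcompl
  obtain ⟨e, heD, hte⟩ := hD' t
  have htwo : 1 < #{O ∈ P | e ∈ cut ends O} := by
    rw [hP.card_filter_mem_cut_eq hl hc hb hD, if_pos heD]
    omega
  obtain ⟨O', hO', hne⟩ := Finset.exists_mem_ne htwo O
  obtain ⟨hO'P, heO'⟩ := mem_filter.1 hO'
  obtain ⟨a, ha, hae⟩ := exists_mem_ends_of_mem_cut heO'
  have haO : a ∈ Oᶜ := mem_compl.2 fun haO => hne (hP.eq_of_mem hO'P hO ha haO)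
  rw [ht, mem_singleton] at haO
  exact hte (haO ▸ hae)

lemma endCount_biUnion [Finite E] [DecidableEq V] [DecidableEq E] (hl : NoLoops ends)
    (hc : IsCubic ends) (hb : Bridgeless ends) (hP : IsBarrier (deleteEdges ends D) S P)
    (hD : #D ≤ 3) (hone : ∀ O ∈ P, #O = 1) (e : E) :
    endCount ends (P.biUnion id) e = endCount ends S e + if e ∈ D then 2 else 0 := by
  cases nonempty_fintype E
  rw [← card_filter_mem_cut_eq_endCount hl hone, hP.card_filter_mem_cut_eq hl hc hb hD]

lemma biUnion_union_eq_univ [Finite E] [Fintype V] [DecidableEq V] (hl : NoLoops ends)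
    (hc : IsCubic ends) (hb : Bridgeless ends) (hconn : Connected ends)
    (hP : IsBarrier (deleteEdges ends D) S P) (hD : #D ≤ 3) (hone : ∀ O ∈ P, #O = 1) :
    P.biUnion id ∪ S = univ := by
  classical
  cases nonempty_fintype E
  have hdisj : Disjoint (P.biUnion id) S := (disjoint_biUnion_left _ _ _).2 hP.disjoint
  refine hconn.eq_univ_of_cut_eq_empty (eq_empty_of_forall_notMem fun e => ?_) ?_
  · obtain ⟨a, b, hab⟩ := exists_ends_eq ends e
    have hcount := hP.endCount_biUnion hl hc hb hD hone e
    rw [endCount_eq_ite hab (hl.ne hab), endCount_eq_ite hab (hl.ne hab)] at hcount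
    rw [mem_cut_iff_of_ends_eq hab, mem_union, mem_union]
    grind [disjoint_left]
  · have hsize := hP.card_add_two_le
    obtain ⟨O, hO⟩ := card_pos.1 (by omega : 0 < #P)
    obtain ⟨v, rfl⟩ := Finset.card_eq_one.1 (hone O hO)
    exact ⟨v, mem_union_left _ (mem_biUnion.2 ⟨{v}, hO, mem_singleton_self v⟩)⟩

lemma exists_forall_mem_cut [Finite V] [Fintype E] (hl : NoLoops ends) (hc : IsCubic ends)
    (hb : Bridgeless ends) (hconn : Connected ends) (h5 : TwoFactorsAllC5 ends)
    (hP : IsBarrier (deleteEdges ends D) S P) (hD : #D ≤ 3) (hD' : ∀ t, ∃ e ∈ D, t ∉ ends e) :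
    ∃ I : Finset V, (∀ e ∈ D, ∀ v ∈ ends e, v ∈ I) ∧ ∀ e ∉ D, e ∈ cut ends I := by
  classical
  cases nonempty_fintype V
  have hone : ∀ O ∈ P, #O = 1 := fun O => hP.card_eq_one hl hc hb hconn h5 hD hD'
  have hdisj : Disjoint (P.biUnion id) S := (disjoint_biUnion_left _ _ _).2 hP.disjoint
  have hcover (v : V) : v ∈ P.biUnion id ∪ S :=
    hP.biUnion_union_eq_univ hl hc hb hconn hD hone ▸ mem_univ v
  refine ⟨P.biUnion id, fun e he v hv => ?_, fun e he => ?_⟩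
  · obtain ⟨a, hav⟩ := Sym2.mem_iff_exists.1 hv
    have hcount := hP.endCount_biUnion hl hc hb hD hone e
    rw [endCount_eq_ite hav (hl.ne hav), if_pos he] at hcount
    grind
  · obtain ⟨a, b, hab⟩ := exists_ends_eq ends e
    have hcount := hP.endCount_biUnion hl hc hb hD hone e
    have ha := hcover a
    have hb := hcover b
    rw [endCount_eq_ite hab (hl.ne hab), endCount_eq_ite hab (hl.ne hab), if_neg he] at hcount
    rw [mem_cut_iff_of_ends_eq hab]
    grind [disjoint_left]

end IsBarrier

lemma IsTwoFactor.card_inter_eq_card_sdiff_add [Fintype E] [DecidableEq V] [DecidableEq E]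
    (hl : NoLoops ends) {F D : Finset E} (hF : IsTwoFactor ends F) {I C : Finset V}
    (hID : ∀ e ∈ D, ∀ v ∈ ends e, v ∈ I) (hI : ∀ e ∉ D, e ∈ cut ends I)
    (hC : Disjoint F (cut ends C)) (hFD : ∀ e ∈ F ∩ D, ∀ v ∈ ends e, v ∈ C) :
    #(C ∩ I) = #(C \ I) + #(F ∩ D) := by
  have hcount : ∀ e ∈ F,
      endCount ends (C ∩ I) e = endCount ends (C \ I) e + if e ∈ D then 2 else 0 := by
    intro e he
    obtain ⟨a, b, hab⟩ := exists_ends_eq ends e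
    have hCab := mem_iff_mem_of_disjoint_cut hC he hab
    have hIab : e ∉ D → ¬(a ∈ I ↔ b ∈ I) := fun heD => (mem_cut_iff_of_ends_eq hab).1 (hI e heD)
    have hends : a ∈ ends e ∧ b ∈ ends e := by simp [hab]
    rw [endCount_eq_ite hab (hl.ne hab), endCount_eq_ite hab (hl.ne hab)]
    grind
  have hsum := sum_congr rfl hcount
  rw [sum_add_distrib, ← sum_card_edgesAt, ← sum_card_edgesAt,
    sum_congr rfl fun v _ => hF.card_edgesAt v, sum_congr rfl fun v _ => hF.card_edgesAt v,
    sum_ite_mem, sum_const, sum_const, sum_const] at hsum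
  simp only [smul_eq_mul] at hsum
  omega

lemma TwoFactorsAllC5.exists_isTwoFactor_of_not_concurrent [Finite V] [Finite E] (hl : NoLoops ends)
    (hc : IsCubic ends) (hb : Bridgeless ends) (hconn : Connected ends)
    (h5 : TwoFactorsAllC5 ends) {e₁ e₂ e₃ : E} {v : V} (hne : e₁ ≠ e₂) (hv₁ : v ∈ ends e₁)
    (hv₂ : v ∈ ends e₂) (hD : ∀ t ∈ ends e₁, t ∈ ends e₂ → t ∉ ends e₃) :
    ∃ F : Finset E, IsTwoFactor ends F ∧ e₁ ∈ F ∧ e₂ ∈ F ∧ e₃ ∈ F := by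
  classical
  cases nonempty_fintype E
  obtain ⟨F, hF, hDF⟩ | ⟨S, P, hP⟩ :=
    hc.exists_isTwoFactor_or_exists_isBarrier hl {e₁, e₂, e₃}
  · exact ⟨F, hF, by simpa [insert_subset_iff] using hDF⟩
  obtain ⟨I, hID, hI⟩ := hP.exists_forall_mem_cut hl hc hb hconn h5 card_le_three
    fun t => by simpa [-not_and, imp_iff_not_or] using hD t
  obtain ⟨F, hF, hDF⟩ := hb.exists_isTwoFactor_of_card_le_two hl hc (card_pair hne).le
  simp only [insert_subset_iff, singleton_subset_iff] at hDF
  refine ⟨F, hF, hDF.1, hDF.2, ?_⟩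
  by_contra he₃
  obtain ⟨C, hvC, hC5, hC, -⟩ := h5.exists_component hF v
  have hFD : F ∩ {e₁, e₂, e₃} = {e₁, e₂} := by grind
  have mem_C {e} (heF : e ∈ F) (hve : v ∈ ends e) : ∀ x ∈ ends e, x ∈ C := by
    obtain ⟨z, hz⟩ := Sym2.mem_iff_exists.1 hve
    simp [hz, hvC, ← mem_iff_mem_of_disjoint_cut hC heF hz]
  have hbalance := hF.card_inter_eq_card_sdiff_add hl hID hI hC (by
    simpa [hFD] using ⟨mem_C hDF.1 hv₁, mem_C hDF.2 hv₂⟩)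
  have hcard := card_inter_add_card_sdiff C I
  rw [hFD, card_pair hne] at hbalance
  omega

end PathsOfLengthThree

section FiveCycles

/-- The vertices `c` and the edges `f`, indexed by `ZMod n`, form a cycle of length `n` in cyclic
order. -/
def IsCycle (ends : E → Sym2 V) {n : ℕ} (c : ZMod n → V) (f : ZMod n → E) : Prop :=
  Function.Injective c ∧ Function.Injective f ∧ ∀ i, ends (f i) = s(c i, c (i + 1))

lemma isCycle_of_injective {n : ℕ} (hn : (2 : ZMod n) ≠ 0) {c : ZMod n → V} {f : ZMod n → E}
    (hc : Function.Injective c) (hf : ∀ i, ends (f i) = s(c i, c (i + 1))) :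
    IsCycle ends c f := by
  refine ⟨hc, fun i j hij => ?_, hf⟩
  have hends := congrArg ends hij
  rw [hf, hf, Sym2.eq_iff] at hends
  rcases hends with ⟨hi, -⟩ | ⟨hi, hj⟩
  · exact hc hi
  · refine absurd ?_ hn
    linear_combination hc hj - hc hi

variable {F : Finset E} {u v w x y : V} {e₁ e₂ e₃ : E}

lemma ne_of_ends_eq (h₁ : ends e₁ = s(u, v)) (h₂ : ends e₂ = s(v, w)) (huw : u ≠ w) :
    e₁ ≠ e₂ := by
  rintro rfl
  exact huw (Sym2.congr_right.1 (Sym2.eq_swap.trans (h₁.symm.trans h₂)))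

lemma IsTwoFactor.notMem_ends_of_mem_ends (hF : IsTwoFactor ends F) (he₁ : e₁ ∈ F) (he₂ : e₂ ∈ F)
    (h₁ : ends e₁ = s(u, v)) (h₂ : ends e₂ = s(v, w)) (huw : u ≠ w) (hyu : y ≠ u) (hyv : y ≠ v)
    (hyw : y ≠ w) {g : E} (hg : g ∈ F) (hyg : y ∈ ends g) : v ∉ ends g := by
  classical
  intro hvg
  have hne := ne_of_ends_eq h₁ h₂ huw
  have hmem : g ∈ edgesAt ends F v := mem_edgesAt.2 ⟨hg, hvg⟩
  rw [hF.edgesAt_eq_pair he₁ he₂ hne (by simp [h₁]) (by simp [h₂]), mem_insert,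
    mem_singleton] at hmem
  rcases hmem with rfl | rfl <;> simp_all

namespace TwoFactorsAllC5

lemma not_triangle [Finite V] [Finite E] (hl : NoLoops ends) (h5 : TwoFactorsAllC5 ends)
    (hF : IsTwoFactor ends F) (he₁ : e₁ ∈ F) (he₂ : e₂ ∈ F) (he₃ : e₃ ∈ F)
    (h₁ : ends e₁ = s(u, v)) (h₂ : ends e₂ = s(v, w)) (h₃ : ends e₃ = s(w, u)) : False := by
  classical
  cases nonempty_fintype E
  have huv := hl.ne h₁
  have hvw := hl.ne h₂
  have hwu := hl.ne h₃
  have hclosed : Disjoint F (cut ends {u, v, w}) := by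
    have h₁' : e₁ ∉ cut ends {u, v, w} := by simp [mem_cut_iff_of_ends_eq h₁]
    have h₂' : e₂ ∉ cut ends {u, v, w} := by simp [mem_cut_iff_of_ends_eq h₂]
    have h₃' : e₃ ∉ cut ends {u, v, w} := by simp [mem_cut_iff_of_ends_eq h₃]
    have h₁₂ : e₁ ≠ e₂ := by rintro rfl; simp_all
    have h₂₃ : e₂ ≠ e₃ := by rintro rfl; simp_all
    have h₃₁ : e₃ ≠ e₁ := by rintro rfl; simp_all
    refine hF.disjoint_cut_of_forall_exists fun z hz => ?_
    simp only [mem_insert, mem_singleton] at hz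
    rcases hz with rfl | rfl | rfl
    · exact ⟨e₃, he₃, e₁, he₁, h₃₁, ⟨by simp [h₃], h₃'⟩, by simp [h₁], h₁'⟩
    · exact ⟨e₁, he₁, e₂, he₂, h₁₂, ⟨by simp [h₁], h₁'⟩, by simp [h₂], h₂'⟩
    · exact ⟨e₂, he₂, e₃, he₃, h₂₃, ⟨by simp [h₂], h₂'⟩, by simp [h₃], h₃'⟩
  have hdvd := h5.five_dvd_card hF hclosed
  rw [card_eq_three.2 ⟨u, v, w, huv, hwu.symm, hvw, rfl⟩] at hdvd
  omega

lemma exists_disjoint_cut_insert [Finite V] [Fintype E] [DecidableEq V] (hl : NoLoops ends)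
    (h5 : TwoFactorsAllC5 ends) (hF : IsTwoFactor ends F) (he₁ : e₁ ∈ F) (he₂ : e₂ ∈ F)
    (he₃ : e₃ ∈ F) (h₁ : ends e₁ = s(u, v)) (h₂ : ends e₂ = s(v, w)) (h₃ : ends e₃ = s(w, x))
    (huw : u ≠ w) (hvx : v ≠ x) (hux : u ≠ x) :
    ∃ y, (y ≠ u ∧ y ≠ v ∧ y ≠ w ∧ y ≠ x) ∧ Disjoint F (cut ends {y, u, v, w, x}) := by
  obtain ⟨C, hvC, hC5, hC, -⟩ := h5.exists_component hF v
  have huC : u ∈ C := (mem_iff_mem_of_disjoint_cut hC he₁ h₁).2 hvC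
  have hwC : w ∈ C := (mem_iff_mem_of_disjoint_cut hC he₂ h₂).1 hvC
  have hxC : x ∈ C := (mem_iff_mem_of_disjoint_cut hC he₃ h₃).1 hwC
  have hsub : {u, v, w, x} ⊆ C := by simp [insert_subset_iff, *]
  have hfour : #{u, v, w, x} = 4 := by
    have huv := hl.ne h₁
    have hvw := hl.ne h₂
    have hwx := hl.ne h₃
    simp [*]
  obtain ⟨y, hy, rfl⟩ := (covBy_iff_exists_insert.1 (covBy_iff_card_sdiff_eq_one.2
    ⟨hsub, by rw [card_sdiff_of_subset hsub, hC5, hfour]⟩))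
  exact ⟨y, by simpa using hy, hC⟩

lemma exists_closing_edges [Finite V] [Fintype E] [DecidableEq V] (hl : NoLoops ends)
    (hc : IsCubic ends) (hb : Bridgeless ends) (h5 : TwoFactorsAllC5 ends)
    (hF : IsTwoFactor ends F) (he₁ : e₁ ∈ F) (he₂ : e₂ ∈ F) (he₃ : e₃ ∈ F)
    (h₁ : ends e₁ = s(u, v)) (h₂ : ends e₂ = s(v, w)) (h₃ : ends e₃ = s(w, x)) (huw : u ≠ w)
    (hvx : v ≠ x) (hy : y ≠ u ∧ y ≠ v ∧ y ≠ w ∧ y ≠ x)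
    (hclosed : Disjoint F (cut ends {y, u, v, w, x})) :
    (∃ q ∈ F, ends q = s(x, y)) ∧ ∃ p ∈ F, ends p = s(y, u) := by
  classical
  obtain ⟨hyu, hyv, hyw, hyx⟩ := hy
  have hend {g} (hg : g ∈ F) (hyg : y ∈ ends g) : ends g = s(y, u) ∨ ends g = s(x, y) := by
    obtain ⟨z, hz⟩ := Sym2.mem_iff_exists.1 hyg
    have hvg := hF.notMem_ends_of_mem_ends he₁ he₂ h₁ h₂ huw hyu hyv hyw hg hyg
    have hwg := hF.notMem_ends_of_mem_ends he₂ he₃ h₂ h₃ hvx hyv hyw hyx hg hyg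
    have hyz := hl.ne hz
    have hzmem := (mem_iff_mem_of_disjoint_cut hclosed hg hz).1 (mem_insert_self y _)
    simp only [mem_insert, mem_singleton] at hzmem
    rcases hzmem with rfl | rfl | rfl | rfl | rfl <;> simp_all
  obtain ⟨p, q, hpq, hedges⟩ := card_eq_two.1 (hF.card_edgesAt y)
  obtain ⟨hp, hyp⟩ := mem_edgesAt.1 (hedges ▸ mem_insert_self p {q} : p ∈ edgesAt ends F y)
  obtain ⟨hq, hyq⟩ := mem_edgesAt.1 (hedges ▸ by simp : q ∈ edgesAt ends F y)
  have hends : ends p ≠ ends q := (h5.injective_ends hl hc hb).ne hpq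
  rcases hend hp hyp, hend hq hyq with ⟨hpu | hpx, hqu | hqx⟩
  · exact absurd (hpu.trans hqu.symm) hends
  · exact ⟨⟨q, hq, hqx⟩, p, hp, hpu⟩
  · exact ⟨⟨p, hp, hpx⟩, q, hq, hqu⟩
  · exact absurd (hpx.trans hqx.symm) hends

lemma exists_isCycle [Finite V] [Finite E] (hl : NoLoops ends) (hc : IsCubic ends)
    (hb : Bridgeless ends) (h5 : TwoFactorsAllC5 ends) (hF : IsTwoFactor ends F) (he₁ : e₁ ∈ F)
    (he₂ : e₂ ∈ F) (he₃ : e₃ ∈ F) (h₁ : ends e₁ = s(u, v)) (h₂ : ends e₂ = s(v, w))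
    (h₃ : ends e₃ = s(w, x)) (huw : u ≠ w) (hvx : v ≠ x) :
    ∃ (c : ZMod 5 → V) (f : ZMod 5 → E), IsCycle ends c f ∧ (∀ i, f i ∈ F) ∧
      e₁ ∈ Set.range f ∧ e₂ ∈ Set.range f ∧ e₃ ∈ Set.range f := by
  classical
  cases nonempty_fintype E
  have hux : u ≠ x := by
    rintro rfl
    exact h5.not_triangle hl hF he₁ he₂ he₃ h₁ h₂ h₃
  obtain ⟨y, hy, hclosed⟩ := h5.exists_disjoint_cut_insert hl hF he₁ he₂ he₃ h₁ h₂ h₃ huw hvx hux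
  obtain ⟨⟨q, hq, hqe⟩, p, hp, hpe⟩ := h5.exists_closing_edges hl hc hb hF
    he₁ he₂ he₃ h₁ h₂ h₃ huw hvx hy hclosed
  have huv := hl.ne h₁
  have hvw := hl.ne h₂
  have hwx := hl.ne h₃
  refine ⟨![u, v, w, x, y], ![e₁, e₂, e₃, q, p], isCycle_of_injective (by decide) ?_ ?_, ?_,
    ⟨0, rfl⟩, ⟨1, rfl⟩, ⟨2, rfl⟩⟩
  · intro i j hij
    fin_cases i <;> fin_cases j <;> first | rfl | simp_all
  · intro i
    fin_cases i <;> assumption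
  · intro i
    fin_cases i <;> assumption

lemma exists_isCycle_of_path [Finite V] [Finite E] (hl : NoLoops ends) (hc : IsCubic ends)
    (hb : Bridgeless ends) (hconn : Connected ends) (h5 : TwoFactorsAllC5 ends)
    (h₁ : ends e₁ = s(u, v)) (h₂ : ends e₂ = s(v, w)) (huw : u ≠ w) (hne : e₃ ≠ e₂)
    (hw : w ∈ ends e₃) :
    ∃ F : Finset E, IsTwoFactor ends F ∧ ∃ (c : ZMod 5 → V) (f : ZMod 5 → E), IsCycle ends c f ∧
      (∀ i, f i ∈ F) ∧ e₁ ∈ Set.range f ∧ e₂ ∈ Set.range f ∧ e₃ ∈ Set.range f := by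
  obtain ⟨x, h₃⟩ := Sym2.mem_iff_exists.1 hw
  have huv := hl.ne h₁
  have hvw := hl.ne h₂
  have hvx : v ≠ x := by
    rintro rfl
    exact hne (h5.injective_ends hl hc hb (h₃.trans (Sym2.eq_swap.trans h₂.symm)))
  obtain ⟨F, hF, he₁, he₂, he₃⟩ := h5.exists_isTwoFactor_of_not_concurrent hl hc hb hconn
    (ne_of_ends_eq h₁ h₂ huw) (v := v) (by simp [h₁]) (by simp [h₂]) (e₃ := e₃) (by simp [*])
  exact ⟨F, hF, h5.exists_isCycle hl hc hb hF he₁ he₂ he₃ h₁ h₂ h₃ huw hvx⟩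

end TwoFactorsAllC5

end FiveCycles

end Mg

theorem stmt12 {V E : Type} [Fintype V] [Fintype E] (ends : E → Sym2 V)
    (hl : Mg.NoLoops ends) (hc : Mg.IsCubic ends) (hb : Mg.Bridgeless ends)
    (hconn : Mg.Connected ends) (h5 : Mg.TwoFactorsAllC5 ends) :
    ∀ (u v w : V) (e₁ e₂ : E),
      ends e₁ = s(u, v) → ends e₂ = s(v, w) → u ≠ w →
      ∃ (c c' : ZMod 5 → V) (f f' : ZMod 5 → E),
        (Function.Injective c ∧ Function.Injective f ∧
          ∀ i, ends (f i) = s(c i, c (i + 1))) ∧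
        (Function.Injective c' ∧ Function.Injective f' ∧
          ∀ i, ends (f' i) = s(c' i, c' (i + 1))) ∧
        e₁ ∈ Set.range f ∧ e₂ ∈ Set.range f ∧
        e₁ ∈ Set.range f' ∧ e₂ ∈ Set.range f' ∧
        Set.range f ≠ Set.range f' := by
  classical
  intro u v w e₁ e₂ h₁ h₂ huw
  obtain ⟨g, g', hgg', ⟨hge, hwg⟩, hge', hwg'⟩ := hc.exists_ne_and_exists_ne w e₂
  obtain ⟨_, -, c, f, hcycle, -, he₁, he₂, hg⟩ :=
    h5.exists_isCycle_of_path hl hc hb hconn h₁ h₂ huw hge hwg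
  obtain ⟨F', hF', c', f', hcycle', hfF', he₁', he₂', hg'⟩ :=
    h5.exists_isCycle_of_path hl hc hb hconn h₁ h₂ huw hge' hwg'
  refine ⟨c, c', f, f', hcycle, hcycle', he₁, he₂, he₁', he₂', fun hrange => ?_⟩
  have mem_F' : Set.range f' ⊆ F' := Set.range_subset_iff.2 hfF'
  have hgw : g ∈ Mg.edgesAt ends F' w := Mg.mem_edgesAt.2 ⟨mem_F' (hrange ▸ hg), hwg⟩
  rw [hF'.edgesAt_eq_pair (mem_F' he₂') (mem_F' hg') hge'.symm (by simp [h₂]) hwg',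
    Finset.mem_insert, Finset.mem_singleton] at hgw
  exact hgw.elim hge hgg'
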